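/- arXiv:2208.10554 — 2 statements merged into one kernel-verified Lean document; each statement's English description precedes it below -/
import Mathlib

section
/- Let λ = (λ_1, …, λ_q) be a partition of length q (so λ_1 ≥ λ_2 ≥ … ≥ λ_q ≥ 1), and set ℓ_i = λ_i + q − i for 1 ≤ i ≤ q. Then the number f^λ of standard Young tableaux of shape λ is given by the Frobenius formula f^λ = ( |λ|! / ∏_{i=1}^q ℓ_i! ) · ∏_{1 ≤ i < j ≤ q} (ℓ_i − ℓ_j), where |λ| = ∑_{i=1}^q λ_i. -/
/-- The cells of the Young diagram of the partition `l = (l 0, l 1, …, l (q-1))`: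
the pair `⟨i, j⟩` is a cell iff `j < l i` (row `i`, column `j`, zero-indexed). -/
def sytShape (q : ℕ) (l : Fin q → ℕ) : Finset (Σ _ : Fin q, ℕ) :=
  Finset.univ.sigma fun i => Finset.range (l i)

/-- `T` is a standard Young tableau of shape `l`: it is a bijective labelling of the
cells of the diagram by `1, …, |λ|` (here realized as `Fin (∑ i, l i)`) whose entries
strictly increase along each row and strictly increase down each column. -/
def IsSYT {q : ℕ} (l : Fin q → ℕ)
    (T : {x // x ∈ sytShape q l} ≃ Fin (∑ i, l i)) : Prop :=
  (∀ x y : {x // x ∈ sytShape q l},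
      (x : Σ _ : Fin q, ℕ).1 = (y : Σ _ : Fin q, ℕ).1 →
      (x : Σ _ : Fin q, ℕ).2 < (y : Σ _ : Fin q, ℕ).2 → T x < T y) ∧
  (∀ x y : {x // x ∈ sytShape q l},
      (x : Σ _ : Fin q, ℕ).1 < (y : Σ _ : Fin q, ℕ).1 →
      (x : Σ _ : Fin q, ℕ).2 = (y : Σ _ : Fin q, ℕ).2 → T x < T y)

/-- `f^λ`, the number of standard Young tableaux of shape `λ = l`. -/
noncomputable def sytCount (q : ℕ) (l : Fin q → ℕ) : ℕ :=
  Nat.card {T : {x // x ∈ sytShape q l} ≃ Fin (∑ i, l i) // IsSYT l T}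

/-!
The largest entry of a standard Young tableau sits in a corner of the shape, so `f^λ` is the sum of
`f^μ` over the shapes `μ` obtained from `λ` by removing a corner. Frobenius' formula satisfies the
same recursion: removing a cell from row `i` lowers `ℓ_i` by one, and, with
`Δ(x) = ∏_{i < j} (x_i - x_j)`, the recursion becomes
`∑_i ℓ_i Δ(ℓ_1, …, ℓ_i - 1, …, ℓ_q) = |λ| Δ(ℓ)`. The rows without a removable cell may be included
in this sum because their terms vanish: either `ℓ_i = 0`, or `ℓ_i - 1 = ℓ_{i+1}`.

The identity for `Δ` holds for arbitrary `x`. In the Vandermonde determinant of the `y_i = -x_i` the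
powers `y ^ k` may be replaced by the rising factorials `y (y + 1) ⋯ (y + k - 1)`, and for these
raising `y` by one and multiplying by `y` amounts to multiplying by `y + k`. So each term of the
Leibniz expansion acquires the factor `∑_i (y_i + σ i) = ∑_i (y_i + i)`, the same for all `σ`.
-/

section LinearExtensions

variable {α β : Type*} {n : ℕ}

/-- The number of bijective labellings of `α` by `0, …, n - 1` that increase along `r`: linear
extensions of `r` when `α` has `n` elements, and none (junk value `0`) otherwise. No order axioms
are imposed on `r`. -/
noncomputable def linearExtensionCount (r : α → α → Prop) (n : ℕ) : ℕ :=
  Nat.card {T : α ≃ Fin n // ∀ x y, r x y → T x < T y}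

theorem linearExtensionCount_congr {r : α → α → Prop} {s : β → β → Prop} (e : r ≃r s) (n : ℕ) :
    linearExtensionCount r n = linearExtensionCount s n := by
  refine Nat.card_congr ((e.toEquiv.equivCongr (.refl _)).subtypeEquiv fun T => ?_)
  refine ⟨fun h x y hxy => h _ _ (e.symm.map_rel_iff.2 hxy), fun h x y hxy => ?_⟩
  rw [← e.symm_apply_apply x, ← e.symm_apply_apply y]
  exact h (e x) (e y) (e.map_rel_iff.2 hxy)

theorem linearExtensionCount_zero [IsEmpty α] (r : α → α → Prop) :
    linearExtensionCount r 0 = 1 := by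
  rw [linearExtensionCount, Nat.card_eq_one_iff_unique]
  exact ⟨inferInstance, ⟨⟨Equiv.equivOfIsEmpty _ _, isEmptyElim⟩⟩⟩

section LabelLast

variable [DecidableEq α]

/-- The labelling that extends a labelling of the elements other than `a` by giving `a` the
largest label. -/
def labelLast (a : α) (T : {x // x ≠ a} ≃ Fin n) : α ≃ Fin (n + 1) :=
  (Equiv.optionSubtypeNe a).symm.trans (T.optionCongr.trans finSuccEquivLast.symm)

@[simp]
theorem labelLast_self (a : α) (T : {x // x ≠ a} ≃ Fin n) : labelLast a T a = Fin.last n := by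
  simp [labelLast]

theorem labelLast_of_ne {a x : α} (T : {x // x ≠ a} ≃ Fin n) (h : x ≠ a) :
    labelLast a T x = (T ⟨x, h⟩).castSucc := by
  simp [labelLast, h]

theorem labelLast_injective (a : α) :
    Function.Injective (labelLast a : ({x // x ≠ a} ≃ Fin n) → (α ≃ Fin (n + 1))) := by
  refine fun T U h => Equiv.ext fun x => Fin.castSucc_injective n ?_
  rw [← labelLast_of_ne T x.2, h, labelLast_of_ne U x.2]

theorem exists_labelLast_eq {a : α} {T : α ≃ Fin (n + 1)} (h : T a = Fin.last n) :
    ∃ U, labelLast a U = T := by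
  have ne_iff (x : α) : x ≠ a ↔ T x ≠ Fin.last n := by rw [← h, T.apply_eq_iff_eq.ne]
  let U : {x // x ≠ a} ≃ Fin n :=
    (T.subtypeEquiv ne_iff).trans (finSuccAboveEquiv (Fin.last n)).symm
  refine ⟨U, Equiv.ext fun x => ?_⟩
  by_cases hx : x = a
  · rw [hx, labelLast_self, h]
  · rw [labelLast_of_ne U hx, ← Fin.succAbove_last]
    exact congrArg Subtype.val
      ((finSuccAboveEquiv (Fin.last n)).apply_symm_apply ⟨T x, (ne_iff x).1 hx⟩)

theorem labelLast_increasing_iff {r : α → α → Prop} {a : α} {T : {x // x ≠ a} ≃ Fin n} :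
    (∀ x y, r x y → labelLast a T x < labelLast a T y) ↔
      (∀ y, ¬ r a y) ∧ ∀ x y, Subrel r (· ≠ a) x y → T x < T y := by
  constructor
  · refine fun h => ⟨fun y hy => ?_, fun x y hxy => ?_⟩
    · have := h a y hy
      rw [labelLast_self] at this
      exact this.not_ge (Fin.le_last _)
    · simpa [labelLast_of_ne T x.2, labelLast_of_ne T y.2] using h x y hxy
  · rintro ⟨ha, hT⟩ x y hxy
    have hx : x ≠ a := by rintro rfl; exact ha y hxy
    rw [labelLast_of_ne T hx]
    by_cases hy : y = a
    · rw [hy, labelLast_self]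
      exact Fin.castSucc_lt_last _
    · rw [labelLast_of_ne T hy]
      exact hT ⟨x, hx⟩ ⟨y, hy⟩ hxy

end LabelLast

theorem linearExtensionCount_succ [Fintype α] (r : α → α → Prop)
    [DecidablePred fun a => ∀ y, ¬ r a y] (n : ℕ) :
    linearExtensionCount r (n + 1) =
      ∑ a with ∀ y, ¬ r a y, linearExtensionCount (Subrel r (· ≠ a)) n := by
  classical
  let extend : (Σ a : {a // ∀ y, ¬ r a y},
      {T : {x // x ≠ a.1} ≃ Fin n // ∀ x y, Subrel r (· ≠ a.1) x y → T x < T y}) →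
      {T : α ≃ Fin (n + 1) // ∀ x y, r x y → T x < T y} :=
    fun p => ⟨labelLast p.1.1 p.2.1, labelLast_increasing_iff.2 ⟨p.1.2, p.2.2⟩⟩
  have extend_bijective : Function.Bijective extend := by
    constructor
    · rintro ⟨⟨a, ha⟩, T, hT⟩ ⟨⟨b, hb⟩, U, hU⟩ h
      have h : labelLast a T = labelLast b U := congrArg Subtype.val h
      obtain rfl : a = b := (labelLast a T).injective <| by
        rw [labelLast_self, h, labelLast_self]
      obtain rfl := labelLast_injective a h
      rfl
    · rintro ⟨T, hT⟩
      obtain ⟨a, ha⟩ := T.surjective (Fin.last n)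
      obtain ⟨U, rfl⟩ := exists_labelLast_eq ha
      obtain ⟨ha, hU⟩ := labelLast_increasing_iff.1 hT
      exact ⟨⟨⟨a, ha⟩, U, hU⟩, rfl⟩
  rw [linearExtensionCount, ← Nat.card_eq_of_bijective extend extend_bijective, Nat.card_sigma,
    Finset.sum_subtype _ (p := fun a => ∀ y, ¬ r a y) (by simp)]
  rfl

end LinearExtensions

section YoungDiagrams

variable {q : ℕ}

/-- The relation on cells along which standard Young tableaux increase: `x` is to the left of `y`
in the same row, or above `y` in the same column. -/
def CellLT (x y : Σ _ : Fin q, ℕ) : Prop :=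
  x.1 = y.1 ∧ x.2 < y.2 ∨ x.1 < y.1 ∧ x.2 = y.2

theorem sytCount_eq_linearExtensionCount (l : Fin q → ℕ) :
    sytCount q l = linearExtensionCount (Subrel CellLT (· ∈ sytShape q l)) (∑ i, l i) := by
  refine Nat.card_congr (Equiv.subtypeEquivRight fun T => ?_)
  simp only [IsSYT, CellLT, subrel_val, or_imp, and_imp, forall_and]

theorem mem_sytShape {l : Fin q → ℕ} {x : Σ _ : Fin q, ℕ} : x ∈ sytShape q l ↔ x.2 < l x.1 := by
  simp [sytShape]

theorem sytCount_zero : sytCount q 0 = 1 := by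
  have : IsEmpty {x // x ∈ sytShape q 0} := ⟨fun x => by simpa using mem_sytShape.1 x.2⟩
  rw [sytCount_eq_linearExtensionCount]
  simpa using linearExtensionCount_zero (Subrel CellLT (· ∈ sytShape q 0))

/-- Row `i` ends in a cell with nothing below it, so that this cell can be removed. -/
def IsCornerRow (l : Fin q → ℕ) (i : Fin q) : Prop :=
  0 < l i ∧ ∀ j, i < j → l j < l i

instance (l : Fin q → ℕ) : DecidablePred (IsCornerRow l) :=
  fun _ => inferInstanceAs (Decidable (_ ∧ _))

/-- The shape `l` with the last cell of row `i` removed (and `l` itself if that row is empty). -/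
def removeCell (l : Fin q → ℕ) (i : Fin q) : Fin q → ℕ :=
  Function.update l i (l i - 1)

theorem sum_removeCell_add_one {l : Fin q → ℕ} {i : Fin q} (hi : 0 < l i) :
    ∑ j, removeCell l i j + 1 = ∑ j, l j := by
  rw [removeCell, Finset.sum_update_of_mem (Finset.mem_univ i),
    Finset.sum_eq_add_sum_sdiff_singleton_of_mem (Finset.mem_univ i)]
  omega

theorem IsCornerRow.antitone_removeCell {l : Fin q → ℕ} (hl : Antitone l) {i : Fin q}
    (hi : IsCornerRow l i) : Antitone (removeCell l i) := by
  intro a b hab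
  have hba := hl hab
  simp only [removeCell, Function.update_apply]
  split_ifs with hb ha ha
  · rfl
  · subst hb; omega
  · subst ha
    have := hi.2 b (hab.lt_of_ne' hb)
    omega
  · exact hba

theorem mem_sytShape_removeCell {l : Fin q → ℕ} {i : Fin q} {x : Σ _ : Fin q, ℕ} :
    x ∈ sytShape q (removeCell l i) ↔ x ∈ sytShape q l ∧ x ≠ ⟨i, l i - 1⟩ := by
  obtain ⟨a, b⟩ := x
  rw [mem_sytShape, mem_sytShape, removeCell]
  by_cases ha : a = i
  · subst ha
    simp only [Function.update_self, ne_eq, Sigma.mk.injEq, heq_eq_eq, true_and]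
    omega
  · simp [ha]

/-- Removing the cell at the end of row `i` from the cells of `l` leaves the cells of
`removeCell l i`, with the same order relation. -/
def subrelNeIso (l : Fin q → ℕ) (i : Fin q) (hi : ⟨i, l i - 1⟩ ∈ sytShape q l) :
    Subrel (Subrel CellLT (· ∈ sytShape q l)) (· ≠ ⟨⟨i, l i - 1⟩, hi⟩) ≃r
      Subrel CellLT (· ∈ sytShape q (removeCell l i)) where
  toFun x := ⟨x.1.1, mem_sytShape_removeCell.2 ⟨x.1.2, fun h => x.2 (Subtype.ext h)⟩⟩
  invFun x := ⟨⟨x.1, (mem_sytShape_removeCell.1 x.2).1⟩,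
    fun h => (mem_sytShape_removeCell.1 x.2).2 (congrArg Subtype.val h)⟩
  map_rel_iff' := .rfl

theorem forall_not_cellLT_iff {l : Fin q → ℕ} (x : {x // x ∈ sytShape q l}) :
    (∀ y, ¬ Subrel CellLT (· ∈ sytShape q l) x y) ↔
      x.1.2 = l x.1.1 - 1 ∧ IsCornerRow l x.1.1 := by
  obtain ⟨⟨i, j⟩, hx⟩ := x
  have hj : j < l i := mem_sytShape.1 hx
  simp only [subrel_val, CellLT, Subtype.forall, IsCornerRow, Sigma.forall, mem_sytShape, not_or,
    not_and]
  constructor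
  · intro h
    refine ⟨?_, by omega, fun k hik => ?_⟩
    · by_contra hne
      exact (h i (j + 1) (by omega)).1 rfl (by omega)
    · by_contra! hk
      exact (h k j (by omega)).2 hik rfl
  · rintro ⟨rfl, -, hi⟩ k m hm
    refine ⟨?_, fun hik => ?_⟩
    · rintro rfl
      omega
    · have := hi k hik
      omega

theorem sytCount_eq_sum_removeCell {l : Fin q → ℕ} (hl : ∑ i, l i ≠ 0) :
    sytCount q l = ∑ i with IsCornerRow l i, sytCount q (removeCell l i) := by
  classical
  obtain ⟨n, hn⟩ := Nat.exists_eq_add_one_of_ne_zero hl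
  have last_mem {i} (hi : IsCornerRow l i) : (⟨i, l i - 1⟩ : Σ _ : Fin q, ℕ) ∈ sytShape q l :=
    mem_sytShape.2 (Nat.sub_one_lt hi.1.ne')
  rw [sytCount_eq_linearExtensionCount, hn, linearExtensionCount_succ]
  symm
  refine Finset.sum_bij (fun i hi => ⟨⟨i, l i - 1⟩, last_mem (Finset.mem_filter.1 hi).2⟩)
    ?_ ?_ ?_ ?_
  · intro i hi
    refine Finset.mem_filter.2 ⟨Finset.mem_univ _, (forall_not_cellLT_iff _).2 ⟨rfl, ?_⟩⟩
    exact (Finset.mem_filter.1 hi).2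
  · intro i _ j _ hij
    exact congrArg (fun x => x.1.1) hij
  · rintro ⟨⟨i, j⟩, hx⟩ hmax
    obtain ⟨hj, hi⟩ := (forall_not_cellLT_iff _).1 (Finset.mem_filter.1 hmax).2
    obtain rfl : j = l i - 1 := hj
    exact ⟨i, Finset.mem_filter.2 ⟨Finset.mem_univ i, hi⟩, rfl⟩
  · intro i hi
    have hi : IsCornerRow l i := (Finset.mem_filter.1 hi).2
    have hsum : ∑ j, removeCell l i j = n := by
      have := sum_removeCell_add_one hi.1
      omega
    rw [sytCount_eq_linearExtensionCount, hsum,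
      linearExtensionCount_congr (subrelNeIso l i (last_mem hi))]

end YoungDiagrams

section Vandermonde

open Matrix Polynomial

theorem sum_det_updateRow_add_mul {m R : Type*} [Fintype m] [DecidableEq m] [CommRing R]
    (A : Matrix m m R) (y d : m → R) :
    ∑ i, (A.updateRow i fun j => (y i + d j) * A i j).det = (∑ i, (y i + d i)) * A.det := by
  have prod_updateRow (σ : Equiv.Perm m) (i : m) :
      ∏ k, A.updateRow i (fun j => (y i + d j) * A i j) k (σ k) =
        (y i + d (σ i)) * ∏ k, A k (σ k) := by
    rw [← Finset.mul_prod_erase _ _ (Finset.mem_univ i),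
      ← Finset.mul_prod_erase _ (fun k => A k (σ k)) (Finset.mem_univ i), updateRow_self, mul_assoc]
    congr 2
    exact Finset.prod_congr rfl fun k hk => by rw [updateRow_ne (Finset.ne_of_mem_erase hk)]
  have sum_perm (σ : Equiv.Perm m) : ∑ i, (y i + d (σ i)) = ∑ i, (y i + d i) := by
    simp only [Finset.sum_add_distrib, Equiv.sum_comp σ d]
  simp only [← det_transpose (updateRow _ _ _), ← det_transpose A, det_apply', transpose_apply,
    prod_updateRow]
  rw [Finset.sum_comm, Finset.mul_sum]
  refine Finset.sum_congr rfl fun σ _ => ?_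
  rw [← Finset.mul_sum, ← Finset.sum_mul, sum_perm]
  ring

theorem mul_ascPochhammer_eval_add_one {R : Type*} [CommSemiring R] (y : R) (k : ℕ) :
    y * (ascPochhammer R k).eval (y + 1) = (y + k) * (ascPochhammer R k).eval y := by
  have h := ascPochhammer_succ_eval k y
  rw [ascPochhammer_succ_left] at h
  simpa [mul_comm] using h

variable {R : Type*} [CommRing R] {n : ℕ}

theorem sum_mul_det_vandermonde_update_add_one [IsDomain R] (y : Fin n → R) :
    ∑ i, y i * (vandermonde (Function.update y i (y i + 1))).det =
      (∑ i, (y i + ((i : ℕ) : R))) * (vandermonde y).det := by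
  let A (z : Fin n → R) : Matrix (Fin n) (Fin n) R :=
    of fun i j => (ascPochhammer R j).eval (z i)
  have det_eq (z : Fin n → R) : (vandermonde z).det = (A z).det :=
    det_eval_matrixOfPolynomials_eq_det_vandermonde z (fun j => ascPochhammer R j)
      (fun j => ascPochhammer_natDegree R j) (fun j => monic_ascPochhammer R j)
  have A_update (i : Fin n) : A (Function.update y i (y i + 1)) =
      (A y).updateRow i fun j => (ascPochhammer R j).eval (y i + 1) := by
    ext k j
    by_cases hk : k = i
    · simp [A, hk]
    · simp [A, hk]
  simp only [det_eq]
  rw [← sum_det_updateRow_add_mul]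
  refine Finset.sum_congr rfl fun i _ => ?_
  rw [A_update, ← det_updateRow_smul]
  congr 2
  exact funext fun j => mul_ascPochhammer_eval_add_one (y i) j

/-- The Vandermonde product `∏_{i < j} (x_i - x_j)`, with the signs of Frobenius' formula:
`Matrix.det_vandermonde` has the opposite differences. -/
def differenceProduct (x : Fin n → R) : R :=
  ∏ i, ∏ j ∈ Finset.univ.filter (fun j : Fin n => i < j), (x i - x j)

theorem differenceProduct_eq_det_vandermonde (x : Fin n → R) :
    differenceProduct x = (vandermonde fun i => -x i).det := by
  simp only [differenceProduct, det_vandermonde, neg_sub_neg, Finset.filter_lt_eq_Ioi]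

theorem differenceProduct_eq_zero {x : Fin n → R} {i j : Fin n} (hij : i ≠ j) (h : x i = x j) :
    differenceProduct x = 0 := by
  rw [differenceProduct_eq_det_vandermonde]
  exact det_zero_of_row_eq hij (by ext; simp [h])

theorem sum_mul_differenceProduct_update_sub_one [IsDomain R] (x : Fin n → R) :
    ∑ i, x i * differenceProduct (Function.update x i (x i - 1)) =
      (∑ i, (x i - ((i : ℕ) : R))) * differenceProduct x := by
  have neg_update (i : Fin n) : (fun k => -Function.update x i (x i - 1) k) =
      Function.update (fun k => -x k) i (-x i + 1) := by
    ext k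
    by_cases hk : k = i
    · subst hk
      simp only [Function.update_self, neg_sub]
      ring
    · simp [hk]
  have sum_neg_add : ∑ i, (-x i + ((i : ℕ) : R)) = -∑ i, (x i - ((i : ℕ) : R)) := by
    simp only [neg_add_eq_sub, ← Finset.sum_neg_distrib, neg_sub]
  simp only [differenceProduct_eq_det_vandermonde, neg_update]
  simpa only [neg_mul, Finset.sum_neg_distrib, sum_neg_add, neg_inj] using
    sum_mul_det_vandermonde_update_add_one fun i => -x i

end Vandermonde

section FrobeniusNumber

open scoped Nat

variable {q : ℕ}

/-- The shifted part `ℓ_i = λ_i + q - i` of the partition `l`; the offset reads `q - 1 - i` because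
rows are numbered from `0`. -/
def shiftedPart (l : Fin q → ℕ) (i : Fin q) : ℕ :=
  l i + (q - 1 - (i : ℕ))

/-- The right-hand side `(|λ|! / ∏_i ℓ_i!) · ∏_{i < j} (ℓ_i - ℓ_j)` of Frobenius' formula. -/
def frobeniusNumber (l : Fin q → ℕ) : ℚ :=
  ((∑ i, l i)! : ℚ) / (∏ i, ((shiftedPart l i)! : ℚ)) *
    differenceProduct fun i => (shiftedPart l i : ℚ)

theorem prod_factorial_shiftedPart_ne_zero (l : Fin q → ℕ) :
    ∏ i, ((shiftedPart l i)! : ℚ) ≠ 0 :=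
  Finset.prod_ne_zero_iff.2 fun _ _ => by positivity

theorem differenceProduct_shiftedPart_zero :
    differenceProduct (fun i => (shiftedPart (0 : Fin q → ℕ) i : ℚ)) =
      ∏ i, ((shiftedPart (0 : Fin q → ℕ) i)! : ℚ) := by
  rw [differenceProduct_eq_det_vandermonde]
  cases q with
  | zero => simp
  | succ n =>
    have neg_shiftedPart (i : Fin (n + 1)) :
        -(shiftedPart (0 : Fin (n + 1) → ℕ) i : ℚ) = ((i : ℕ) : ℚ) - n := by
      rw [shiftedPart, Pi.zero_apply, zero_add, Nat.add_sub_cancel, Nat.cast_sub i.is_le, neg_sub]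
    simp only [neg_shiftedPart]
    rw [Matrix.det_vandermonde_sub, Matrix.det_vandermonde_id_eq_superFactorial,
      ← Nat.prod_range_succ_factorial, ← Finset.prod_range_reflect, Finset.prod_range]
    simp [shiftedPart]

theorem frobeniusNumber_zero : frobeniusNumber (0 : Fin q → ℕ) = 1 := by
  rw [frobeniusNumber, differenceProduct_shiftedPart_zero,
    div_mul_cancel₀ _ (prod_factorial_shiftedPart_ne_zero _)]
  simp

theorem sum_shiftedPart_sub (l : Fin q → ℕ) :
    ∑ i, ((shiftedPart l i : ℚ) - (i : ℕ)) = ((∑ i, l i : ℕ) : ℚ) := by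
  have sum_rev : ∑ i : Fin q, ((q - 1 - (i : ℕ) : ℕ) : ℚ) = ∑ i : Fin q, ((i : ℕ) : ℚ) := by
    rw [← Equiv.sum_comp Fin.revPerm fun i : Fin q => ((i : ℕ) : ℚ)]
    refine Finset.sum_congr rfl fun i _ => ?_
    rw [Fin.revPerm_apply, Fin.val_rev, Nat.sub_sub, add_comm 1]
  simp [shiftedPart, Finset.sum_add_distrib, sum_rev]

theorem shiftedPart_removeCell {l : Fin q → ℕ} {i : Fin q} (hi : 0 < l i) :
    shiftedPart (removeCell l i) = Function.update (shiftedPart l) i (shiftedPart l i - 1) := by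
  ext j
  by_cases hj : j = i
  · subst hj
    simp only [shiftedPart, removeCell, Function.update_self]
    omega
  · simp [shiftedPart, removeCell, hj]

theorem prod_factorial_shiftedPart_removeCell {l : Fin q → ℕ} {i : Fin q} (hi : 0 < l i) :
    shiftedPart l i * ∏ j, (shiftedPart (removeCell l i) j)! = ∏ j, (shiftedPart l j)! := by
  have hpos : shiftedPart l i ≠ 0 := by
    rw [shiftedPart]
    omega
  rw [shiftedPart_removeCell hi, ← Finset.mul_prod_erase _ _ (Finset.mem_univ i),
    ← Finset.mul_prod_erase _ (fun j => (shiftedPart l j)!) (Finset.mem_univ i), ← mul_assoc,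
    Function.update_self, Nat.mul_factorial_pred hpos]
  congr 1
  exact Finset.prod_congr rfl fun j hj => by
    rw [Function.update_of_ne (Finset.ne_of_mem_erase hj)]

theorem frobeniusNumber_removeCell {l : Fin q → ℕ} {i : Fin q} (hi : 0 < l i) :
    frobeniusNumber (removeCell l i) =
      ((∑ j, l j - 1)! : ℚ) / (∏ j, ((shiftedPart l j)! : ℚ)) *
        (shiftedPart l i * differenceProduct
          (Function.update (fun j => (shiftedPart l j : ℚ)) i (shiftedPart l i - 1))) := by
  have hpos : 0 < shiftedPart l i := Nat.add_pos_left hi _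
  have cast_shiftedPart : (fun j => (shiftedPart (removeCell l i) j : ℚ)) =
      Function.update (fun j => (shiftedPart l j : ℚ)) i (shiftedPart l i - 1) := by
    ext j
    rw [shiftedPart_removeCell hi]
    by_cases hj : j = i
    · simp [hj, Nat.cast_sub hpos]
    · simp [hj]
  have prod_eq : ∏ j, ((shiftedPart l j)! : ℚ) =
      shiftedPart l i * ∏ j, ((shiftedPart (removeCell l i) j)! : ℚ) := by
    exact_mod_cast (prod_factorial_shiftedPart_removeCell hi).symm
  have hpos' : (shiftedPart l i : ℚ) ≠ 0 := by exact_mod_cast hpos.ne'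
  rw [frobeniusNumber, cast_shiftedPart, prod_eq, ← sum_removeCell_add_one hi,
    Nat.add_sub_cancel]
  have := prod_factorial_shiftedPart_ne_zero (removeCell l i)
  field_simp

theorem shiftedPart_of_not_isCornerRow {l : Fin q → ℕ} (hl : Antitone l) {i : Fin q}
    (hi : ¬ IsCornerRow l i) :
    shiftedPart l i = 0 ∨ ∃ k, shiftedPart l i = shiftedPart l k + 1 := by
  have hiq := i.isLt
  by_cases hlast : (i : ℕ) + 1 = q
  · left
    have hli : l i = 0 := by
      by_contra h
      exact hi ⟨Nat.pos_of_ne_zero h, fun j hij => by omega⟩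
    rw [shiftedPart, hli]
    omega
  · right
    let k : Fin q := ⟨i + 1, by omega⟩
    have hik : i < k := Fin.lt_def.2 (Nat.lt_succ_self i)
    have hlk : l k = l i := by
      refine (hl hik.le).antisymm ?_
      by_contra! h
      refine hi ⟨by omega, fun j hij => (hl ?_).trans_lt h⟩
      exact Fin.le_def.2 (Fin.lt_def.1 hij)
    refine ⟨k, ?_⟩
    simp only [shiftedPart, hlk, k]
    omega

theorem shiftedPart_mul_differenceProduct_eq_zero {l : Fin q → ℕ} (hl : Antitone l) {i : Fin q}
    (hi : ¬ IsCornerRow l i) :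
    shiftedPart l i * differenceProduct
      (Function.update (fun j => (shiftedPart l j : ℚ)) i (shiftedPart l i - 1)) = 0 := by
  rcases shiftedPart_of_not_isCornerRow hl hi with h | ⟨k, hk⟩
  · simp [h]
  · have hik : i ≠ k := by
      rintro rfl
      omega
    rw [differenceProduct_eq_zero hik, mul_zero]
    simp [Function.update_of_ne hik.symm, hk]

theorem frobeniusNumber_eq_sum_removeCell {l : Fin q → ℕ} (hl : Antitone l)
    (hsum : ∑ i, l i ≠ 0) :
    frobeniusNumber l = ∑ i with IsCornerRow l i, frobeniusNumber (removeCell l i) := by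
  have cornerRows : ∑ i with IsCornerRow l i, (shiftedPart l i : ℚ) * differenceProduct
      (Function.update (fun j => (shiftedPart l j : ℚ)) i (shiftedPart l i - 1)) =
        ((∑ i, l i : ℕ) : ℚ) * differenceProduct fun i => (shiftedPart l i : ℚ) := by
    rw [← sum_shiftedPart_sub, ← sum_mul_differenceProduct_update_sub_one]
    exact Finset.sum_filter_of_ne fun i _ h =>
      not_not.1 (mt (shiftedPart_mul_differenceProduct_eq_zero hl) h)
  rw [Finset.sum_congr rfl fun i hi =>
    frobeniusNumber_removeCell (Finset.mem_filter.1 hi).2.1, ← Finset.mul_sum, cornerRows,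
    frobeniusNumber, ← Nat.mul_factorial_pred hsum]
  push_cast
  ring

end FrobeniusNumber

theorem frobenius_formula_general {q : ℕ} {l : Fin q → ℕ} (hl : Antitone l) :
    (sytCount q l : ℚ) = frobeniusNumber l := by
  induction hn : ∑ i, l i generalizing l with
  | zero =>
    obtain rfl : l = 0 := funext fun i => Finset.sum_eq_zero_iff.1 hn i (Finset.mem_univ i)
    rw [sytCount_zero, frobeniusNumber_zero, Nat.cast_one]
  | succ n ih =>
    have hsum : ∑ i, l i ≠ 0 := by omega
    rw [sytCount_eq_sum_removeCell hsum, frobeniusNumber_eq_sum_removeCell hl hsum, Nat.cast_sum]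
    refine Finset.sum_congr rfl fun i hi => ?_
    have hi : IsCornerRow l i := (Finset.mem_filter.1 hi).2
    exact ih (hi.antitone_removeCell hl) (by have := sum_removeCell_add_one hi.1; omega)

/-- **Frobenius formula.** For a partition `λ = (λ_1 ≥ ⋯ ≥ λ_q ≥ 1)` (here zero-indexed,
so `l i = λ_{i+1}`) and `ℓ_i = λ_i + q - i` (zero-indexed: `l i + (q - 1 - i)`), the number
of standard Young tableaux of shape `λ` is
`f^λ = (|λ|! / ∏_i ℓ_i!) · ∏_{i < j} (ℓ_i - ℓ_j)`. -/
theorem frobenius_formula (q : ℕ) (hq : 0 < q) (l : Fin q → ℕ)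
    (hmono : ∀ i j : Fin q, i ≤ j → l j ≤ l i) (hpos : ∀ i, 1 ≤ l i) :
    (sytCount q l : ℚ) =
      (((∑ i, l i).factorial : ℚ) /
          ∏ i : Fin q, ((l i + (q - 1 - (i : ℕ))).factorial : ℚ)) *
        ∏ i : Fin q, ∏ j ∈ Finset.univ.filter (fun j : Fin q => i < j),
          (((l i + (q - 1 - (i : ℕ)) : ℕ) : ℚ) - ((l j + (q - 1 - (j : ℕ)) : ℕ) : ℚ)) :=
  frobenius_formula_general fun i j => hmono i j
end

section
/- Let R be a commutative ring and let (a_n)_{n ≥ 0} and (b_n)_{n ≥ 0} be sequences in R with a_0 = b_0 = 1 satisfying ∑_{k=0}^{n} (−1)^k a_k b_{n−k} = 0 for every n ≥ 1 (equivalently, the generating series A(t) = ∑ a_n t^n and B(t) = ∑ b_n t^n satisfy A(t)·B(−t) = 1). Extend both sequences by a_n = b_n = 0 for n < 0. Then for every partition λ = (λ_1, …, λ_q) with conjugate partition λ̄ = (λ̄_1, …, λ̄_p) (where p = λ_1), the two Schur-type determinants agree: det[ a_{λ_i + j − i} ]_{1 ≤ i,j ≤ q} = det[ b_{λ̄_i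 + j − i} ]_{1 ≤ i,j ≤ p}. (This is the identity Δ_{λ̄}(c(E)) = Δ_λ(s(E)) relating Schur polynomials in Chern classes and in Segre classes; in particular, taking λ = (k), it yields Δ_{p(k)}(s(E)) = c_k(E) for the column partition p(k) consisting of k parts equal to 1.) -/
/-- Extension of a sequence `c : ℕ → R` to integer indices, by `0` for negative indices. -/
def extSeq {R : Type*} [CommRing R] (c : ℕ → R) (n : ℤ) : R :=
  if 0 ≤ n then c n.toNat else 0

/-!
Truncating multiplication in `R⟦X⟧` turns `f * g = 1` into `T f * T g = 1` for lower triangular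
Toeplitz matrices, so by Jacobi each minor of `T f` is, up to `det (T f)` and a sign, the
complementary minor of `T g`. A Schur determinant is the minor of `T f` with rows at the beads
of the Maya diagram of the partition and columns at those of the empty partition; the positions
complementary to the beads are those given by the conjugate partition, so the complementary minor
is a Schur determinant as well. The sign of the bead permutation is `(-1) ^ |λ|`, and it cancels
against the sign produced by passing from `A(-t)` to `A(t)`.
-/

open Matrix PowerSeries

section SchurMatrix

variable {R : Type*} [CommRing R]

/-- The matrix `(c_{μ_i + j - i})`, whose determinant is the Schur determinant `Δ_μ(c)`. -/
def schurMatrix (c : ℕ → R) {n : ℕ} (μ : Fin n → ℕ) : Matrix (Fin n) (Fin n) R :=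
  Matrix.of fun i j => extSeq c ((μ i : ℤ) + (j : ℕ) - (i : ℕ))

theorem extSeq_neg_one_pow_mul (c : ℕ → R) (n : ℤ) :
    extSeq (fun k => (-1) ^ k * c k) n = (n.negOnePow : ℤ) * extSeq c n := by
  unfold extSeq
  split_ifs with hn
  · lift n to ℕ using hn
    simp [Int.negOnePow_def]
  · simp

theorem det_schurMatrix_neg_one_pow_mul (c : ℕ → R) {n : ℕ} (μ : Fin n → ℕ) :
    (schurMatrix (fun k => (-1) ^ k * c k) μ).det =
      (∏ i, (-1) ^ μ i) * (schurMatrix c μ).det := by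
  have hfactor : schurMatrix (fun k => (-1) ^ k * c k) μ =
      Matrix.of fun i j : Fin n => (-1) ^ (μ i + i : ℕ) *
        (Matrix.of fun i j : Fin n => (-1) ^ (j : ℕ) * schurMatrix c μ i j) i j := by
    ext i j
    simp only [schurMatrix, Matrix.of_apply, extSeq_neg_one_pow_mul, Int.negOnePow_add,
      Int.negOnePow_sub, pow_add]
    simp only [Int.negOnePow_def, zpow_natCast]
    push_cast
    ring
  have hsign : ∀ i : Fin n, (-1 : R) ^ (μ i + i : ℕ) * (-1) ^ (i : ℕ) = (-1) ^ μ i := fun i => by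
    rw [pow_add, mul_assoc, ← mul_pow, neg_one_mul, neg_neg, one_pow, mul_one]
  rw [hfactor, det_mul_column, det_mul_row, ← mul_assoc, ← Finset.prod_mul_distrib]
  simp only [hsign]

end SchurMatrix

section Toeplitz

variable {R : Type*} [CommSemiring R] {N : ℕ}

/-- The lower triangular Toeplitz matrix `(f_{x - y})` of a power series `f`: the matrix of
multiplication by `f` on `R⟦X⟧ ⧸ (X ^ N)` in the basis `1, X, …, X ^ (N - 1)`. -/
noncomputable def toeplitz (N : ℕ) (f : R⟦X⟧) : Matrix (Fin N) (Fin N) R :=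
  Matrix.of fun x y => coeff x (X ^ (y : ℕ) * f)

theorem sum_coeff_X_pow_mul_mul_coeff (f g : R⟦X⟧) {n : ℕ} (hn : n < N) :
    ∑ z : Fin N, coeff n (X ^ (z : ℕ) * f) * coeff z g = coeff n (f * g) := by
  rw [mul_comm f g, coeff_mul, Finset.Nat.sum_antidiagonal_eq_sum_range_succ
    (fun i j => coeff i g * coeff j f),
    Fin.sum_univ_eq_sum_range (fun z => coeff n (X ^ z * f) * coeff z g)]
  refine (Finset.sum_subset_zero_on_sdiff (by simpa using hn) (fun z hz => ?_) fun z hz => ?_).symm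
  · have : ¬ z ≤ n := by simp_all
    rw [coeff_X_pow_mul', if_neg this, zero_mul]
  · rw [coeff_X_pow_mul', if_pos (Finset.mem_range_succ_iff.1 hz), mul_comm]

theorem toeplitz_one : toeplitz N (1 : R⟦X⟧) = 1 := by
  ext x y
  simp [toeplitz, coeff_X_pow, Matrix.one_apply, Fin.ext_iff]

theorem toeplitz_mul (f g : R⟦X⟧) : toeplitz N (f * g) = toeplitz N f * toeplitz N g := by
  ext x y
  simp only [toeplitz, Matrix.mul_apply, Matrix.of_apply]
  rw [sum_coeff_X_pow_mul_mul_coeff f _ x.isLt, mul_left_comm]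

end Toeplitz

section ToeplitzRing

variable {R : Type*} [CommRing R] {N : ℕ}

theorem toeplitz_apply (f : R⟦X⟧) (x y : Fin N) :
    toeplitz N f x y = extSeq (fun n => coeff n f) ((x : ℤ) - (y : ℤ)) := by
  simp only [toeplitz, Matrix.of_apply, coeff_X_pow_mul', extSeq, sub_nonneg, Nat.cast_le]
  congr 3
  omega

theorem det_toeplitz (f : R⟦X⟧) : (toeplitz N f).det = constantCoeff f ^ N := by
  rw [det_of_isLowerTriangular]
  · simp [toeplitz, coeff_X_pow_mul']
  · intro x y hxy
    have hlt : ¬ (y : ℕ) ≤ x := not_le.2 hxy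
    rw [toeplitz, Matrix.of_apply, coeff_X_pow_mul', if_neg hlt]

end ToeplitzRing

section ComplementaryMinor

variable {R m n ι : Type*} [CommRing R] [Fintype m] [Fintype n] [Fintype ι]
  [DecidableEq m] [DecidableEq n] [DecidableEq ι]

theorem det_toBlocks₁₁_of_mul_eq_one {A B : Matrix (m ⊕ n) (m ⊕ n) R} (hAB : A * B = 1) :
    A.toBlocks₁₁.det = A.det * B.toBlocks₂₂.det := by
  have hmul : A * fromBlocks 1 B.toBlocks₁₂ 0 B.toBlocks₂₂ =
      fromBlocks A.toBlocks₁₁ 0 A.toBlocks₂₁ 1 := by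
    rw [← fromBlocks_toBlocks A, ← fromBlocks_toBlocks B, fromBlocks_multiply,
      ← fromBlocks_one, fromBlocks_inj] at hAB
    conv_lhs => rw [← fromBlocks_toBlocks A]
    rw [fromBlocks_multiply, hAB.2.1, hAB.2.2.2]
    simp
  simpa using (congrArg det hmul).symm

theorem det_submatrix_equiv (A : Matrix ι ι R) (s e : m ≃ ι) :
    (A.submatrix s e).det = Equiv.Perm.sign (e.symm.trans s) * A.det := by
  rw [← det_permute, ← det_submatrix_equiv_self e]
  congr 1
  ext i j
  simp

theorem det_submatrix_inl_of_mul_eq_one {A B : Matrix ι ι R} (hAB : A * B = 1)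
    (s e : m ⊕ n ≃ ι) :
    (A.submatrix (s ∘ Sum.inl) (e ∘ Sum.inl)).det =
      Equiv.Perm.sign (e.symm.trans s) * A.det *
        (B.submatrix (e ∘ Sum.inr) (s ∘ Sum.inr)).det := by
  have hsub : A.submatrix s e * B.submatrix e s = 1 := by
    rw [submatrix_mul_equiv, hAB, submatrix_one_equiv]
  rw [← det_submatrix_equiv]
  exact det_toBlocks₁₁_of_mul_eq_one hsub

end ComplementaryMinor

/-- The inversions of a shuffle are the pairs of elements of distinct blocks that it swaps. -/
theorem sign_symm_trans_eq_prod_of_shuffle {m n : Type*} [Fintype m] [Fintype n] {N : ℕ}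
    {s e : m ⊕ n ≃ Fin N}
    (hinl : ∀ i i', e (.inl i) < e (.inl i') → s (.inl i) < s (.inl i'))
    (hinr : ∀ j j', e (.inr j) < e (.inr j') → s (.inr j) < s (.inr j'))
    (hcross : ∀ i j, e (.inl i) < e (.inr j)) :
    Equiv.Perm.sign (e.symm.trans s) =
      ∏ i, ∏ j, if s (.inr j) < s (.inl i) then -1 else 1 := by
  have hall : Equiv.Perm.sign (e.symm.trans s) =
      ∏ y, ∏ x, if e x < e y ∧ s y < s x then -1 else 1 := by
    rw [Equiv.Perm.sign_eq_prod_prod_Iio, ← e.prod_comp]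
    refine Finset.prod_congr rfl fun y _ => ?_
    rw [← Finset.filter_gt_eq_Iio, Finset.prod_filter, ← e.prod_comp]
    refine Finset.prod_congr rfl fun x _ => ?_
    simp only [Equiv.trans_apply, Equiv.symm_apply_apply]
    have := s.injective.ne_iff (x := x) (y := y)
    grind
  have hll : ∀ i i', ¬ (e (.inl i) < e (.inl i') ∧ s (.inl i') < s (.inl i)) :=
    fun i i' h => h.2.not_gt (hinl i i' h.1)
  have hrr : ∀ j j', ¬ (e (.inr j) < e (.inr j') ∧ s (.inr j') < s (.inr j)) :=
    fun j j' h => h.2.not_gt (hinr j j' h.1)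
  rw [hall, Finset.prod_comm]
  simp [Fintype.prod_sum_type, hll, hrr, hcross, (hcross _ _).not_gt]

section Conjugate

variable {q : ℕ} {l : Fin q → ℕ}

/-- The part `λ̄_{j + 1} = #{i : l i > j}` of the conjugate of the partition with parts `l i`. -/
def conjPart (l : Fin q → ℕ) (j : ℕ) : ℕ :=
  (Finset.univ.filter fun i => j + 1 ≤ l i).card

theorem conjPart_le (l : Fin q → ℕ) (j : ℕ) : conjPart l j ≤ q :=
  (Finset.card_le_univ _).trans_eq (Fintype.card_fin q)

theorem conjPart_antitone (l : Fin q → ℕ) : Antitone (conjPart l) := fun _ _ hij =>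
  Finset.card_le_card <| Finset.monotone_filter_right _ fun _ _ h =>
    (Nat.succ_le_succ hij).trans h

theorem lt_conjPart_iff (hl : Antitone l) (i : Fin q) (j : ℕ) :
    (i : ℕ) < conjPart l j ↔ j < l i := by
  constructor
  · contrapose!
    intro hj
    have hsub : (Finset.univ.filter fun k => j + 1 ≤ l k) ⊆ Finset.Iio i := fun k hk => by
      by_contra hik
      have := hl (not_lt.1 (Finset.mem_Iio.not.1 hik))
      have := (Finset.mem_filter.1 hk).2
      omega
    simpa [conjPart] using Finset.card_le_card hsub
  · intro hj
    have hsub : Finset.Iic i ⊆ Finset.univ.filter fun k => j + 1 ≤ l k := fun k hk =>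
      Finset.mem_filter.2 ⟨Finset.mem_univ k, hj.trans_le (hl (Finset.mem_Iic.1 hk))⟩
    simpa [conjPart, Nat.succ_le_iff] using Finset.card_le_card hsub

end Conjugate

section MayaDiagram

variable {q p : ℕ} {l : Fin q → ℕ}

/-- The Maya diagram of a partition inside a `q × p` box: `Sum.inl i` and `Sum.inr j` go to the
positions `λ_i - i - 1` and `j - λ̄_j` (with `i`, `j` counted from `0`) in the integer interval
`[-q, p)`, which is shifted here by `q` to become `[0, q + p)`. -/
def mayaPos (p : ℕ) (l : Fin q → ℕ) : Fin q ⊕ Fin p → ℕ :=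
  Sum.elim (fun i => l i + (q - 1 - i)) fun j => q + j - conjPart l j

theorem mayaPos_inl_strictAnti (hl : Antitone l) :
    StrictAnti fun i => mayaPos p l (.inl i) := fun i i' hii' => by
  have := hl hii'.le
  simp only [mayaPos, Sum.elim_inl]
  omega

theorem mayaPos_inr_strictMono (l : Fin q → ℕ) :
    StrictMono fun j => mayaPos p l (.inr j) := fun j j' hjj' => by
  have := conjPart_antitone l (Fin.val_fin_le.2 hjj'.le)
  have := conjPart_le l j
  simp only [mayaPos, Sum.elim_inr]
  omega

theorem mayaPos_inr_lt_inl (hl : Antitone l) {i : Fin q} {j : Fin p} :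
    mayaPos p l (.inr j) < mayaPos p l (.inl i) ↔ j < l i := by
  have := lt_conjPart_iff hl i j
  have := conjPart_le l j
  simp only [mayaPos, Sum.elim_inl, Sum.elim_inr]
  omega

theorem mayaPos_inl_ne_inr (hl : Antitone l) (i : Fin q) (j : Fin p) :
    mayaPos p l (.inl i) ≠ mayaPos p l (.inr j) := by
  have := lt_conjPart_iff hl i j
  have := conjPart_le l j
  simp only [mayaPos, Sum.elim_inl, Sum.elim_inr]
  omega

theorem mayaPos_injective (hl : Antitone l) : Function.Injective (mayaPos p l) :=
  (mayaPos_inl_strictAnti hl).injective.sumElim (mayaPos_inr_strictMono l).injective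
    (mayaPos_inl_ne_inr hl)

theorem mayaPos_lt (hp : ∀ i, l i ≤ p) (x : Fin q ⊕ Fin p) : mayaPos p l x < q + p := by
  rcases x with i | j
  · have := hp i
    simp only [mayaPos, Sum.elim_inl]
    omega
  · simp only [mayaPos, Sum.elim_inr]
    omega

/-- The Maya diagram `mayaPos` of a partition inside a `q × p` box, as a bijection. -/
noncomputable def mayaEquiv (hl : Antitone l) (hp : ∀ i, l i ≤ p) :
    Fin q ⊕ Fin p ≃ Fin (q + p) :=
  Equiv.ofBijective (fun x => ⟨mayaPos p l x, mayaPos_lt hp x⟩) <|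
    (Fintype.bijective_iff_injective_and_card _).2
      ⟨fun _ _ h => mayaPos_injective hl (Fin.val_eq_of_eq h), by simp⟩

@[simp]
theorem val_mayaEquiv (hl : Antitone l) (hp : ∀ i, l i ≤ p) (x : Fin q ⊕ Fin p) :
    (mayaEquiv hl hp x : ℕ) = mayaPos p l x :=
  rfl

/-- The Maya diagram of the empty partition. -/
noncomputable def mayaEquivEmpty (q p : ℕ) : Fin q ⊕ Fin p ≃ Fin (q + p) :=
  mayaEquiv (l := fun _ => 0) antitone_const fun _ => p.zero_le

theorem mayaPos_zero_inl (i : Fin q) : mayaPos p (fun _ : Fin q => 0) (.inl i) = q - 1 - i := by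
  simp [mayaPos]

theorem mayaPos_zero_inr (j : Fin p) : mayaPos p (fun _ : Fin q => 0) (.inr j) = q + j := by
  simp [mayaPos, conjPart]

theorem sign_mayaEquiv (hl : Antitone l) (hp : ∀ i, l i ≤ p) :
    Equiv.Perm.sign ((mayaEquivEmpty q p).symm.trans (mayaEquiv hl hp)) = ∏ i, (-1) ^ l i := by
  rw [sign_symm_trans_eq_prod_of_shuffle]
  · refine Finset.prod_congr rfl fun i _ => ?_
    have hcard : (Finset.univ.filter fun j : Fin p => (j : ℕ) < l i).card = l i := by
      rw [Fin.card_filter_val_lt, min_eq_right (hp i)]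
    simp only [Fin.lt_def, val_mayaEquiv, mayaPos_inr_lt_inl hl]
    rw [← Finset.prod_filter, Finset.prod_const, hcard]
  · intro i i' h
    exact mayaPos_inl_strictAnti (p := p) hl
      ((mayaPos_inl_strictAnti (p := p) antitone_const).lt_iff_gt.1 h)
  · intro j j' h
    exact mayaPos_inr_strictMono l ((mayaPos_inr_strictMono _).lt_iff_lt.1 h)
  · intro i j
    simp only [Fin.lt_def, mayaEquivEmpty, val_mayaEquiv, mayaPos_zero_inl, mayaPos_zero_inr]
    omega

end MayaDiagram

section Duality

variable {R : Type*} [CommRing R] {q p : ℕ} {l : Fin q → ℕ}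

theorem toeplitz_submatrix_inl (f : R⟦X⟧) (hl : Antitone l) (hp : ∀ i, l i ≤ p) :
    (toeplitz (q + p) f).submatrix (mayaEquiv hl hp ∘ Sum.inl) (mayaEquivEmpty q p ∘ Sum.inl) =
      schurMatrix (fun n => coeff n f) l := by
  ext i j
  simp only [submatrix_apply, Function.comp_apply, toeplitz_apply, schurMatrix, Matrix.of_apply,
    mayaEquivEmpty, val_mayaEquiv, mayaPos_zero_inl]
  congr 1
  simp only [mayaPos, Sum.elim_inl]
  omega

theorem toeplitz_submatrix_inr (f : R⟦X⟧) (hl : Antitone l) (hp : ∀ i, l i ≤ p) :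
    (toeplitz (q + p) f).submatrix (mayaEquivEmpty q p ∘ Sum.inr) (mayaEquiv hl hp ∘ Sum.inr) =
      (schurMatrix (fun n => coeff n f) fun j : Fin p => conjPart l j)ᵀ := by
  ext i j
  have := conjPart_le l j
  simp only [submatrix_apply, Function.comp_apply, toeplitz_apply, schurMatrix, Matrix.of_apply,
    transpose_apply, mayaEquivEmpty, val_mayaEquiv, mayaPos_zero_inr]
  congr 1
  simp only [mayaPos, Sum.elim_inr]
  omega

theorem det_schurMatrix_coeff_of_mul_eq_one {f g : R⟦X⟧} (hfg : f * g = 1) (hl : Antitone l)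
    (hp : ∀ i, l i ≤ p) :
    (schurMatrix (fun n => coeff n f) l).det =
      (∏ i, (-1) ^ l i) * constantCoeff f ^ (q + p) *
        (schurMatrix (fun n => coeff n g) fun j : Fin p => conjPart l j).det := by
  have hinv : toeplitz (q + p) f * toeplitz (q + p) g = 1 := by
    rw [← toeplitz_mul, hfg, toeplitz_one]
  have hminor := det_submatrix_inl_of_mul_eq_one hinv (mayaEquiv hl hp) (mayaEquivEmpty q p)
  rw [toeplitz_submatrix_inl, toeplitz_submatrix_inr, det_transpose, det_toeplitz,
    sign_mayaEquiv] at hminor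
  simpa using hminor

theorem mk_neg_one_pow_mul_mul_mk_eq_one {a b : ℕ → R} (h₀ : a 0 * b 0 = 1)
    (hrel : ∀ n : ℕ, 1 ≤ n →
      ∑ k ∈ Finset.range (n + 1), (-1 : R) ^ k * a k * b (n - k) = 0) :
    PowerSeries.mk (fun k => (-1) ^ k * a k) * PowerSeries.mk b = 1 := by
  ext n
  rw [coeff_mul, Finset.Nat.sum_antidiagonal_eq_sum_range_succ
    (fun i j => coeff i (PowerSeries.mk fun k => (-1) ^ k * a k) * coeff j (PowerSeries.mk b))]
  simp only [coeff_mk, coeff_one]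
  rcases n.eq_zero_or_pos with rfl | hn
  · simpa using h₀
  · rw [hrel n hn, if_neg hn.ne']

theorem schur_det_duality_general {a b : ℕ → R} (h₀ : a 0 * b 0 = 1)
    (hrel : ∀ n : ℕ, 1 ≤ n →
      ∑ k ∈ Finset.range (n + 1), (-1 : R) ^ k * a k * b (n - k) = 0)
    (hl : Antitone l) (hp : ∀ i, l i ≤ p) :
    (schurMatrix a l).det =
      a 0 ^ (q + p) * (schurMatrix b fun j : Fin p => conjPart l j).det := by
  have hdual := det_schurMatrix_coeff_of_mul_eq_one
    (mk_neg_one_pow_mul_mul_mk_eq_one h₀ hrel) hl hp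
  have hsign : (∏ i, (-1 : R) ^ l i) * ∏ i, (-1) ^ l i = 1 := by
    simp [← Finset.prod_mul_distrib, ← mul_pow]
  simp only [coeff_mk, ← coeff_zero_eq_constantCoeff_apply, pow_zero, one_mul,
    det_schurMatrix_neg_one_pow_mul] at hdual
  calc (schurMatrix a l).det
    _ = (∏ i, (-1) ^ l i) * ((∏ i, (-1) ^ l i) * (schurMatrix a l).det) := by
      rw [← mul_assoc, hsign, one_mul]
    _ = a 0 ^ (q + p) * (schurMatrix b fun j : Fin p => conjPart l j).det := by
      rw [hdual, ← mul_assoc, ← mul_assoc, hsign, one_mul]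

end Duality

/-- **Schur determinant duality (Jacobi–Trudi / dual Jacobi–Trudi).**
Let `(a_n)` and `(b_n)` be sequences in a commutative ring `R` with `a_0 = b_0 = 1` and
`∑_{k=0}^n (-1)^k a_k b_{n-k} = 0` for all `n ≥ 1` (i.e. `A(t) B(-t) = 1`), both extended
by `0` to negative indices.  Then for any partition `λ = (λ_1 ≥ ⋯ ≥ λ_q ≥ 1)` (here
zero-indexed: `l i = λ_{i+1}`) with conjugate partition `λ̄` of length `p = λ_1`
(`λ̄_i = #{ j : λ_j ≥ i }`, here zero-indexed as `conj i = #{ j : l j ≥ i + 1 }`), the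
Schur-type determinants agree:
`det [a_{λ_i + j - i}]_{1 ≤ i,j ≤ q} = det [b_{λ̄_i + j - i}]_{1 ≤ i,j ≤ p}`. -/
theorem schur_det_duality (R : Type*) [CommRing R] (a b : ℕ → R)
    (ha0 : a 0 = 1) (hb0 : b 0 = 1)
    (hrel : ∀ n : ℕ, 1 ≤ n →
      ∑ k ∈ Finset.range (n + 1), (-1 : R) ^ k * a k * b (n - k) = 0)
    (q : ℕ) (hq : 0 < q) (l : Fin q → ℕ)
    (hmono : ∀ i j : Fin q, i ≤ j → l j ≤ l i) (hpos : ∀ i, 1 ≤ l i) :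
    Matrix.det (fun i j : Fin q => extSeq a ((l i : ℤ) + (j : ℕ) - (i : ℕ))) =
      Matrix.det (fun i j : Fin (l ⟨0, hq⟩) =>
        extSeq b
          (((Finset.univ.filter fun k : Fin q => (i : ℕ) + 1 ≤ l k).card : ℤ) +
            (j : ℕ) - (i : ℕ))) := by
  have hdual := schur_det_duality_general (by rw [ha0, hb0, one_mul]) hrel
    (fun i j => hmono i j) fun i => hmono ⟨0, hq⟩ i (Nat.zero_le i)
  rwa [ha0, one_pow, one_mul] at hdual
end
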